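/- For every integer n ≥ 311, one has B_n ≤ E_n. -/

import Mathlib

/-- Principal branch of the Lambert W function on `[0, ∞)`: for `x ≥ 0`,
`lambertW x` is the unique `y ≥ 0` with `y * exp y = x`. -/
noncomputable def lambertW (x : ℝ) : ℝ := Function.invFun (fun y : ℝ => y * Real.exp y) x

/-- Bell numbers: `Bell 0 = 1` and `Bell (n+1) = ∑_{k=0}^{n} C(n,k) * Bell k`. -/
def Bell : ℕ → ℕ
  | 0 => 1
  | n + 1 => ∑ k ∈ (Finset.range (n + 1)).attach, (n.choose k.1) * Bell k.1
decreasing_by exact Finset.mem_range.mp k.2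

/-- `E n = n! * exp(e^R - 1) / (R^n * sqrt(2π(n+1)(R+1)))` with `R = W(n+1)`. -/
noncomputable def E (n : ℕ) : ℝ :=
  (Nat.factorial n : ℝ) * Real.exp (Real.exp (lambertW (n + 1)) - 1) /
    ((lambertW (n + 1)) ^ n * Real.sqrt (2 * Real.pi * (n + 1) * (lambertW (n + 1) + 1)))

/-!
Dobinski's formula and Fourier inversion of `x ^ n * exp (-R * x)` write `Bell n` as an integral
over the vertical line `Re z = R` of `exp (exp z) / z ^ (n + 1)`. With `R = lambertW (n + 1)` the
line passes through the saddle point, and the Gaussian approximation of the integral is exactly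
`E n`. With `L = exp R`, the cubic phase and the quartic part of the modulus change the Gaussian
integral by a relative amount of order `1 / L`, whose coefficient is negative: it is
`3 * q - 15 / 2 * p ^ 2 / w` up to a positive factor, where `w = 1 + 1 / R`,
`p = 1 / 6 - 1 / (3 * R ^ 2)` and `q = 1 / 24 + 1 / (4 * R ^ 3)`. For `R ≥ 4.6`, in particular for
`n ≥ 457`, this beats all higher-order terms and the part of the line with `|Im z| ≥ 1`.

For `311 ≤ n < 457` the margin is too small for these estimates, and the inequality is checked in
rational arithmetic, from a truncated Dobinski series and a Newton lower bound for
`W = lambertW (n + 1)`. A lower bound is enough because the substitutions `exp W = (n + 1) / W` in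
the exponent and `1 / W ^ n = W * (exp W / (n + 1)) ^ (n + 1)` make `E n` increasing in `W ≥ 1`.
-/

open MeasureTheory Filter Set
open scoped Nat

/-! ### Bell numbers and Dobinski's formula -/

theorem bell_succ (n : ℕ) : Bell (n + 1) = ∑ k ∈ Finset.range (n + 1), n.choose k * Bell k := by
  rw [Bell, Finset.sum_attach _ fun k => n.choose k * Bell k]

theorem hasSum_dobinski (n : ℕ) :
    HasSum (fun k : ℕ => (k : ℝ) ^ n / k !) (Real.exp 1 * Bell n) := by
  induction n using Nat.strong_induction_on with
  | _ n ih =>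
  rcases n with _ | n
  · simpa [Bell, ← Real.exp_eq_exp_ℝ] using NormedSpace.expSeries_div_hasSum_exp (1 : ℝ)
  have shift (j : ℕ) : ((j + 1 : ℕ) : ℝ) ^ (n + 1) / (j + 1)! =
      ∑ i ∈ Finset.range (n + 1), (n.choose i : ℝ) * ((j : ℝ) ^ i / j !) := by
    have binomial : ((j : ℝ) + 1) ^ n = ∑ i ∈ Finset.range (n + 1), (j : ℝ) ^ i * n.choose i := by
      simp [add_pow]
    calc ((j + 1 : ℕ) : ℝ) ^ (n + 1) / (j + 1)!
        = ((j : ℝ) + 1) ^ n / j ! := by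
          rw [Nat.factorial_succ, pow_succ]; push_cast; field_simp
      _ = _ := by
          rw [binomial, Finset.sum_div]
          exact Finset.sum_congr rfl fun i _ => by ring
  have limit : Real.exp 1 * (Bell (n + 1) : ℝ) =
      ∑ i ∈ Finset.range (n + 1), (n.choose i : ℝ) * (Real.exp 1 * Bell i) := by
    rw [bell_succ]
    push_cast
    rw [Finset.mul_sum]
    exact Finset.sum_congr rfl fun i _ => by ring
  rw [← hasSum_nat_add_iff' 1]
  simp only [Finset.range_one, Finset.sum_singleton, Nat.cast_zero, shift, limit,
    zero_pow n.succ_ne_zero, zero_div, sub_zero]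
  exact hasSum_sum fun i hi => (ih i (Finset.mem_range.mp hi)).mul_left _

theorem dobinski_summand_le_geometric {n K : ℕ} (hK : 41 ≤ K) (hn : n ≤ 3 * K) (j : ℕ) :
    ((K + j : ℕ) : ℝ) ^ n / (K + j)! ≤ (K : ℝ) ^ n / K ! * (1 / 2) ^ j := by
  have hK0 : (0 : ℝ) < K := by exact_mod_cast (by omega : 0 < K)
  have exp_three_le : Real.exp 3 ≤ 21 := by
    have hexp : Real.exp 3 = Real.exp 1 ^ 3 := by rw [← Real.exp_nat_mul]; norm_num
    rw [hexp]
    calc Real.exp 1 ^ 3 ≤ 2.7182818286 ^ 3 := by gcongr; exact Real.exp_one_lt_d9.le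
      _ ≤ 21 := by norm_num
  have num_le : ((K + j : ℕ) : ℝ) ^ n ≤ K ^ n * 21 ^ j := by
    have hexponent : (n : ℝ) * (j / K) ≤ j * 3 := by
      have : (n : ℝ) ≤ 3 * K := by exact_mod_cast hn
      rw [← mul_div_assoc, div_le_iff₀ hK0]
      nlinarith [(Nat.cast_nonneg j : (0 : ℝ) ≤ j)]
    calc ((K + j : ℕ) : ℝ) ^ n = K ^ n * (j / K + 1) ^ n := by
          rw [← mul_pow, mul_add, mul_div_cancel₀ _ hK0.ne', mul_one, add_comm, Nat.cast_add]
      _ ≤ K ^ n * Real.exp (j / K) ^ n := by gcongr; exact Real.add_one_le_exp _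
      _ = K ^ n * Real.exp (n * (j / K)) := by rw [Real.exp_nat_mul]
      _ ≤ K ^ n * Real.exp (j * 3) := by gcongr
      _ = K ^ n * Real.exp 3 ^ j := by rw [Real.exp_nat_mul]
      _ ≤ K ^ n * 21 ^ j := by gcongr
  have le_den : (K ! : ℝ) * 42 ^ j ≤ (K + j)! := by
    calc (K ! : ℝ) * 42 ^ j ≤ K ! * (K + 1) ^ j := by
          gcongr
          exact_mod_cast (by omega : 42 ≤ K + 1)
      _ ≤ (K + j)! := by exact_mod_cast Nat.factorial_mul_pow_le_factorial
  calc ((K + j : ℕ) : ℝ) ^ n / (K + j)! ≤ K ^ n * 21 ^ j / (K ! * 42 ^ j) := by gcongr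
    _ = (K : ℝ) ^ n / K ! * (1 / 2) ^ j := by
        rw [mul_div_mul_comm, ← div_pow]; norm_num

/-- `K!` times the Dobinski series for `exp 1 * Bell n`, truncated at `k = K`, with the tail
`∑_{k ≥ K} k ^ n / k!` replaced by twice its first term. -/
def dobinskiUpper (n K : ℕ) : ℕ := ∑ k ∈ Finset.range K, k ^ n * (K ! / k !) + 2 * K ^ n

theorem exp_one_mul_bell_le_dobinskiUpper {n K : ℕ} (hK : 41 ≤ K) (hn : n ≤ 3 * K) :
    Real.exp 1 * Bell n ≤ dobinskiUpper n K / K ! := by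
  have tail := hasSum_le (dobinski_summand_le_geometric hK hn)
    (((hasSum_nat_add_iff' K).mpr (hasSum_dobinski n)).congr_fun fun j => by rw [add_comm K j])
    (hasSum_geometric_two.mul_left _)
  have truncation : (dobinskiUpper n K : ℝ) / K ! =
      ∑ k ∈ Finset.range K, (k : ℝ) ^ n / k ! + K ^ n / K ! * 2 := by
    have hfact : (K ! : ℝ) ≠ 0 := by positivity
    rw [dobinskiUpper]
    push_cast
    rw [add_div, Finset.sum_div]
    congr 1
    · refine Finset.sum_congr rfl fun k hk => ?_
      rw [Nat.cast_div (Nat.factorial_dvd_factorial (Finset.mem_range.mp hk).le) (by positivity)]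
      field_simp
    · ring
  linarith

/-! ### The Lambert function -/

theorem lambertW_mul_exp {x : ℝ} (hx : 0 ≤ x) : lambertW x * Real.exp (lambertW x) = x := by
  refine Function.invFun_eq (f := fun y : ℝ => y * Real.exp y) ?_
  have hmem : x ∈ Icc (0 * Real.exp 0) (x * Real.exp x) :=
    ⟨by simpa using hx, le_mul_of_one_le_right hx (Real.one_le_exp hx)⟩
  obtain ⟨y, -, hy⟩ := intermediate_value_Icc hx
    (f := fun y : ℝ => y * Real.exp y) (by fun_prop) hmem
  exact ⟨y, hy⟩

theorem lambertW_pos {x : ℝ} (hx : 0 < x) : 0 < lambertW x :=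
  pos_of_mul_pos_left ((lambertW_mul_exp hx.le).symm ▸ hx) (Real.exp_pos _).le

theorem exp_lambertW {x : ℝ} (hx : 0 < x) : Real.exp (lambertW x) = x / lambertW x := by
  rw [eq_div_iff (lambertW_pos hx).ne', mul_comm, lambertW_mul_exp hx.le]

theorem le_lambertW {x u : ℝ} (hx : 0 < x) (h : u * Real.exp u ≤ x) : u ≤ lambertW x := by
  by_contra! hlt
  have hW := lambertW_pos hx
  have : lambertW x * Real.exp (lambertW x) < u * Real.exp u := by gcongr
  linarith [lambertW_mul_exp hx.le]

/-- The left-hand side is the Newton iterate from `v` for the concave function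
`y ↦ y - x * exp (-y)`, whose root is `lambertW x`. -/
theorem mul_one_add_div_add_exp_le_lambertW {x : ℝ} (hx : 0 < x) (v : ℝ) :
    x * (1 + v) / (x + Real.exp v) ≤ lambertW x := by
  have hW := lambertW_mul_exp hx.le
  set W := lambertW x
  have tangent : v - W + 1 ≤ Real.exp (v - W) := Real.add_one_le_exp _
  have hexp : Real.exp v = Real.exp W * Real.exp (v - W) := by rw [← Real.exp_add]; ring_nf
  rw [div_le_iff₀ (by positivity), hexp]
  calc x * (1 + v) = x * W + x * (v - W + 1) := by ring
    _ ≤ x * W + x * Real.exp (v - W) := by gcongr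
    _ = W * (x + Real.exp W * Real.exp (v - W)) := by
        linear_combination (-Real.exp (v - W)) * hW

theorem E_eq_exp_lambertW_add_inv (n : ℕ) :
    E n = n ! / ((n : ℝ) + 1) ^ (n + 1) *
      Real.exp ((n + 1) * (lambertW (n + 1) + 1 / lambertW (n + 1)) - 1) *
      (lambertW (n + 1) / √(2 * Real.pi * (n + 1) * (lambertW (n + 1) + 1))) := by
  have hN : (0 : ℝ) < n + 1 := by positivity
  have hexp := exp_lambertW hN
  have hW := lambertW_pos hN
  rw [E]
  set W := lambertW (n + 1)
  have split : Real.exp ((n + 1) * (W + 1 / W) - 1) =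
      Real.exp (Real.exp W - 1) * ((n + 1) / W) ^ (n + 1) := by
    rw [← hexp, ← Real.exp_nat_mul, ← Real.exp_add, hexp]
    congr 1
    push_cast
    ring
  have : 0 < √(2 * Real.pi * (n + 1) * (W + 1)) := by positivity
  rw [split, div_pow, pow_succ W]
  field_simp

theorem le_E_of_le_lambertW {n : ℕ} {u : ℝ} (hu1 : 1 ≤ u) (hu : u ≤ lambertW (n + 1)) :
    n ! / ((n : ℝ) + 1) ^ (n + 1) * Real.exp ((n + 1) * (u + 1 / u) - 1) *
      (u / √(2 * Real.pi * (n + 1) * (u + 1))) ≤ E n := by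
  rw [E_eq_exp_lambertW_add_inv]
  set W := lambertW (n + 1)
  have : 0 < u := by linarith
  have hW0 : 0 < W := by linarith
  have add_inv_mono : u + 1 / u ≤ W + 1 / W := by
    have : W + 1 / W - (u + 1 / u) = (W - u) * (W * u - 1) / (W * u) := by field_simp; ring
    have : 0 ≤ (W - u) * (W * u - 1) / (W * u) :=
      div_nonneg (mul_nonneg (by linarith) (by nlinarith)) (by positivity)
    linarith
  have prefactor_mono : u / √(2 * Real.pi * (n + 1) * (u + 1)) ≤
      W / √(2 * Real.pi * (n + 1) * (W + 1)) := by
    rw [div_le_div_iff₀ (by positivity) (by positivity)]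
    refine le_of_sq_le_sq ?_ (by positivity)
    rw [mul_pow, mul_pow, Real.sq_sqrt (by positivity), Real.sq_sqrt (by positivity)]
    have : u ^ 2 * (W + 1) ≤ W ^ 2 * (u + 1) := by
      nlinarith [mul_nonneg (sub_nonneg.mpr hu) (by positivity : 0 ≤ u * W + u + W)]
    nlinarith [mul_le_mul_of_nonneg_left this (by positivity : 0 ≤ 2 * Real.pi * ((n : ℝ) + 1))]
  gcongr

/-! ### The range `311 ≤ n < 457` by rational arithmetic -/

/-- A rational lower bound for `exp x` when `0 ≤ x`. -/
def expLower (x : ℚ) : ℚ := (∑ m ∈ Finset.range 14, (x / 8) ^ m / m !) ^ 8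

/-- A rational upper bound for `exp x` when `0 ≤ x ≤ 8`. -/
def expUpper (x : ℚ) : ℚ :=
  (∑ m ∈ Finset.range 14, (x / 8) ^ m / m ! + (x / 8) ^ 14 * (14 + 1) / (14 ! * 14)) ^ 8

/-- Rounding down to 40 binary digits, which keeps the numerators and denominators small. -/
def roundDown (x : ℚ) : ℚ := ⌊2 ^ 40 * x⌋ / 2 ^ 40

/-- The rounded Newton step for the Lambert function at `x`, from `v`. -/
def newtonStep (x v : ℚ) : ℚ := roundDown (x * (1 + v) / (x + expUpper v))

/-- The square of the inequality `exp 1 * Bell n ≤ exp 1 * E n`, with the Dobinski series truncated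
at `K`, with `u` in place of `lambertW (n + 1)`, and with `π` and `exp (u + 1 / u)` replaced by
rational bounds. -/
abbrev SquaredBellBound (n K : ℕ) (u : ℚ) : Prop :=
  dobinskiUpper n K ^ 2 * (n + 1) ^ (2 * (n + 1)) * (2 * 3.141593 * (n + 1) * (u + 1)) ≤
    (n ! * K ! * u) ^ 2 * roundDown (expLower (u + 1 / u)) ^ (2 * (n + 1))

theorem exp_eq_exp_div_eight_pow (x : ℝ) : Real.exp x = Real.exp (x / 8) ^ 8 := by
  rw [← Real.exp_nat_mul]
  congr 1
  push_cast
  ring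

theorem expLower_le_exp {x : ℚ} (hx : 0 ≤ x) : (expLower x : ℝ) ≤ Real.exp x := by
  have hx8 : (0 : ℝ) ≤ x / 8 := by exact_mod_cast div_nonneg hx (by norm_num)
  rw [exp_eq_exp_div_eight_pow, expLower]
  push_cast
  gcongr
  exact Real.sum_le_exp_of_nonneg hx8 14

theorem exp_le_expUpper {x : ℚ} (hx0 : 0 ≤ x) (hx8 : x ≤ 8) : Real.exp x ≤ expUpper x := by
  have hnonneg : (0 : ℝ) ≤ x / 8 := by exact_mod_cast div_nonneg hx0 (by norm_num)
  have hle : (x / 8 : ℝ) ≤ 1 := by exact_mod_cast (div_le_one (by norm_num)).mpr hx8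
  rw [exp_eq_exp_div_eight_pow, expUpper]
  have taylor := Real.exp_bound' hnonneg hle (n := 14) (by norm_num)
  push_cast at taylor ⊢
  gcongr

theorem roundDown_le (x : ℚ) : roundDown x ≤ x := by
  rw [roundDown, div_le_iff₀ (by positivity), mul_comm]
  exact Int.floor_le _

theorem roundDown_nonneg {x : ℚ} (hx : 0 ≤ x) : 0 ≤ roundDown x :=
  div_nonneg (by exact_mod_cast Int.floor_nonneg.mpr (by positivity)) (by positivity)

theorem expLower_nonneg (x : ℚ) : 0 ≤ expLower x := by
  rw [expLower]
  positivity

theorem newtonStep_le_lambertW {x v : ℚ} (hx : 0 < x) (hv0 : 0 ≤ v) (hv8 : v ≤ 8) :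
    (newtonStep x v : ℝ) ≤ lambertW x := by
  have hx' : (0 : ℝ) < x := by exact_mod_cast hx
  have : (0 : ℝ) ≤ v := by exact_mod_cast hv0
  calc (newtonStep x v : ℝ) ≤ x * (1 + v) / (x + expUpper v) := by
        exact_mod_cast roundDown_le _
    _ ≤ x * (1 + v) / (x + Real.exp v) := by gcongr; exact exp_le_expUpper hv0 hv8
    _ ≤ lambertW x := mul_one_add_div_add_exp_le_lambertW hx' v

theorem roundDown_expLower_pow_le_exp {x : ℚ} (hx : 0 ≤ x) (m : ℕ) :
    (roundDown (expLower x) : ℝ) ^ m ≤ Real.exp (m * x) := by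
  have hnonneg : (0 : ℝ) ≤ roundDown (expLower x) := by
    exact_mod_cast roundDown_nonneg (expLower_nonneg _)
  have hle : (roundDown (expLower x) : ℝ) ≤ Real.exp x :=
    (Rat.cast_le.mpr (roundDown_le _)).trans (expLower_le_exp hx)
  rw [Real.exp_nat_mul]
  gcongr

theorem SquaredBellBound.dobinskiUpper_mul_sqrt_le {n K : ℕ} {u : ℚ} (hu : 0 < u)
    (h : SquaredBellBound n K u) :
    dobinskiUpper n K * ((n : ℝ) + 1) ^ (n + 1) * √(2 * Real.pi * (n + 1) * (u + 1)) ≤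
      n ! * K ! * u * Real.exp ((n + 1) * (u + 1 / u)) := by
  have : (0 : ℝ) < u := by exact_mod_cast hu
  have hx : 0 ≤ u + 1 / u := by positivity
  have hV0 : (0 : ℝ) ≤ roundDown (expLower (u + 1 / u)) := by
    exact_mod_cast roundDown_nonneg (expLower_nonneg _)
  have hV := roundDown_expLower_pow_le_exp hx (n + 1)
  have hreal := Rat.cast_le (K := ℝ).mpr h
  push_cast at hV hreal
  set V := ((roundDown (expLower (u + 1 / u)) : ℚ) : ℝ)
  refine le_of_sq_le_sq ?_ (by positivity)
  calc (dobinskiUpper n K * ((n : ℝ) + 1) ^ (n + 1) * √(2 * Real.pi * (n + 1) * (u + 1))) ^ 2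
      = (dobinskiUpper n K : ℝ) ^ 2 * (n + 1) ^ (2 * (n + 1)) *
          (2 * Real.pi * (n + 1) * (u + 1)) := by
        rw [mul_pow, Real.sq_sqrt (by positivity)]; ring
    _ ≤ (dobinskiUpper n K : ℝ) ^ 2 * (n + 1) ^ (2 * (n + 1)) *
          (2 * 3.141593 * (n + 1) * (u + 1)) := by
        gcongr; exact Real.pi_lt_d6.le
    _ ≤ (n ! * K ! * (u : ℝ)) ^ 2 * V ^ (2 * (n + 1)) := by norm_num at hreal ⊢; exact hreal
    _ = (n ! * K ! * (u : ℝ)) ^ 2 * (V ^ (n + 1)) ^ 2 := by ring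
    _ ≤ (n ! * K ! * (u : ℝ)) ^ 2 * Real.exp ((n + 1) * (u + 1 / u)) ^ 2 := by gcongr
    _ = (n ! * K ! * u * Real.exp ((n + 1) * (u + 1 / u))) ^ 2 := by ring

theorem SquaredBellBound.bell_le_E {n K : ℕ} {u : ℚ} (hK : 41 ≤ K) (hn : n ≤ 3 * K)
    (hu1 : 1 ≤ u) (hu : (u : ℝ) ≤ lambertW (n + 1)) (h : SquaredBellBound n K u) :
    (Bell n : ℝ) ≤ E n := by
  have hu1' : (1 : ℝ) ≤ u := by exact_mod_cast hu1
  have hbound := h.dobinskiUpper_mul_sqrt_le (by linarith)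
  refine le_trans ?_ (le_E_of_le_lambertW hu1' hu)
  have : 0 < √(2 * Real.pi * (n + 1) * (u + 1)) := by positivity
  calc (Bell n : ℝ) = Real.exp 1 * Bell n / Real.exp 1 := by field_simp
    _ ≤ dobinskiUpper n K / K ! / Real.exp 1 := by
        gcongr; exact exp_one_mul_bell_le_dobinskiUpper hK hn
    _ ≤ n ! * u * Real.exp ((n + 1) * (u + 1 / u)) /
          (((n : ℝ) + 1) ^ (n + 1) * √(2 * Real.pi * (n + 1) * (u + 1))) / Real.exp 1 := by
        refine div_le_div_of_nonneg_right ?_ (Real.exp_pos 1).le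
        rw [div_le_div_iff₀ (by positivity) (by positivity)]
        linarith
    _ = _ := by
        rw [Real.exp_sub]
        field_simp

theorem squaredBellBound_of_mem_Ico : ∀ n ∈ Finset.Ico 311 457,
    let v := (newtonStep ((n : ℕ) + 1))^[2] (87 / 20)
    let u := newtonStep (n + 1) v
    0 ≤ v ∧ v ≤ 8 ∧ 1 ≤ u ∧ SquaredBellBound n 152 u := by
  decide +kernel

theorem bell_le_E_of_mem_Ico {n : ℕ} (hn : n ∈ Finset.Ico 311 457) : (Bell n : ℝ) ≤ E n := by
  obtain ⟨hv0, hv8, hu1, h⟩ := squaredBellBound_of_mem_Ico n hn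
  have hn3 : n ≤ 3 * 152 := by have := Finset.mem_Ico.mp hn; omega
  have hu := newtonStep_le_lambertW (x := n + 1) (by positivity) hv0 hv8
  push_cast at hu
  exact h.bell_le_E (by norm_num) hn3 hu1 hu

/-! ### Powers and Bell numbers as integrals over a vertical line -/

section VerticalLine

open Complex FourierTransform

theorem norm_pow_mul_cexp_neg_mul (z : ℂ) (n : ℕ) {x : ℝ} (hx : 0 ≤ x) :
    ‖(x : ℂ) ^ n * cexp (-z * x)‖ = x ^ (n : ℝ) * Real.exp (-z.re * x) := by
  simp [norm_exp, abs_of_nonneg hx]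

theorem integrableOn_pow_mul_cexp_neg_mul {z : ℂ} (hz : 0 < z.re) (n : ℕ) :
    IntegrableOn (fun x : ℝ => (x : ℂ) ^ n * cexp (-z * x)) (Ioi 0) := by
  have hn : (-1 : ℝ) < n := by linarith [(Nat.cast_nonneg n : (0 : ℝ) ≤ n)]
  have hreal := integrableOn_rpow_mul_exp_neg_mul_rpow (p := 1) hn one_pos hz
  refine Integrable.mono' hreal (Continuous.aestronglyMeasurable (by fun_prop)) ?_
  filter_upwards [ae_restrict_mem measurableSet_Ioi] with x hx
  rw [norm_pow_mul_cexp_neg_mul z n (le_of_lt hx), Real.rpow_one]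

theorem tendsto_pow_mul_cexp_neg_mul_atTop {z : ℂ} (hz : 0 < z.re) (n : ℕ) :
    Tendsto (fun x : ℝ => (x : ℂ) ^ n * cexp (-z * x)) atTop (nhds 0) := by
  rw [tendsto_zero_iff_norm_tendsto_zero]
  refine (tendsto_rpow_mul_exp_neg_mul_atTop_nhds_zero n z.re hz).congr' ?_
  filter_upwards [eventually_ge_atTop 0] with x hx
  rw [norm_pow_mul_cexp_neg_mul z n hx]

theorem integral_pow_succ_mul_cexp_neg_mul {z : ℂ} (hz : 0 < z.re) (n : ℕ) :
    ∫ x : ℝ in Ioi 0, (x : ℂ) ^ (n + 1) * cexp (-z * x) =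
      (n + 1) / z * ∫ x : ℝ in Ioi 0, (x : ℂ) ^ n * cexp (-z * x) := by
  have hz0 : z ≠ 0 := by rintro rfl; simp at hz
  have hderiv (x : ℝ) : HasDerivAt (fun x : ℝ => (x : ℂ) ^ (n + 1) * cexp (-z * x) / -z)
      ((x : ℂ) ^ (n + 1) * cexp (-z * x) - (n + 1) / z * ((x : ℂ) ^ n * cexp (-z * x))) x := by
    have hpow := (hasDerivAt_pow (n + 1) (x : ℂ)).comp_ofReal
    have hexp := ((hasDerivAt_id (x : ℂ)).const_mul (-z)).cexp.comp_ofReal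
    refine ((hpow.mul hexp).div_const (-z)).congr_deriv ?_
    simp only [id_eq, Nat.add_sub_cancel, Nat.cast_add, Nat.cast_one]
    field_simp
    ring
  have hint := integrableOn_pow_mul_cexp_neg_mul hz
  have parts := integral_Ioi_of_hasDerivAt_of_tendsto' (a := 0) (fun x _ => hderiv x)
    ((hint (n + 1)).sub ((hint n).const_mul _))
    ((tendsto_pow_mul_cexp_neg_mul_atTop hz (n + 1)).div_const (-z))
  rw [integral_sub (hint (n + 1)) ((hint n).const_mul _), integral_const_mul] at parts
  simpa [sub_eq_zero] using parts

theorem integral_pow_mul_cexp_neg_mul {z : ℂ} (hz : 0 < z.re) (n : ℕ) :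
    ∫ x : ℝ in Ioi 0, (x : ℂ) ^ n * cexp (-z * x) = n ! / z ^ (n + 1) := by
  induction n with
  | zero => simpa using integral_exp_mul_complex_Ioi (a := -z) (by simpa using hz) 0
  | succ n ih =>
    have hz0 : z ≠ 0 := by rintro rfl; simp at hz
    rw [integral_pow_succ_mul_cexp_neg_mul hz, ih, Nat.factorial_succ]
    push_cast
    field_simp
    ring

variable {R : ℝ} {n : ℕ}

theorem ofReal_add_mul_I_ne_zero (hR : 0 < R) (y : ℝ) : (R : ℂ) + y * I ≠ 0 := fun h => by
  simpa [hR.ne'] using congrArg re h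

theorem continuous_one_div_vertical_pow (hR : 0 < R) (m : ℕ) :
    Continuous fun y : ℝ => 1 / ((R : ℂ) + y * I) ^ m :=
  continuous_const.div (by fun_prop) fun y => pow_ne_zero _ (ofReal_add_mul_I_ne_zero hR y)

theorem norm_one_div_vertical_pow_le (hR : 0 < R) (m : ℕ) (y : ℝ) :
    ‖1 / ((R : ℂ) + y * I) ^ (m + 2)‖ ≤ 1 / R ^ (m + 2) * (1 + (y / R) ^ 2)⁻¹ := by
  have hsq : ‖(R : ℂ) + y * I‖ ^ 2 = R ^ 2 + y ^ 2 := by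
    rw [← normSq_eq_norm_sq, normSq_add_mul_I]
  have hle : R ≤ ‖(R : ℂ) + y * I‖ := by
    simpa [abs_of_pos hR] using abs_re_le_norm ((R : ℂ) + y * I)
  calc ‖1 / ((R : ℂ) + y * I) ^ (m + 2)‖ = 1 / (‖(R : ℂ) + y * I‖ ^ m * (R ^ 2 + y ^ 2)) := by
        rw [norm_div, norm_one, norm_pow, pow_add, hsq]
    _ ≤ 1 / (R ^ m * (R ^ 2 + y ^ 2)) := by gcongr
    _ = 1 / R ^ (m + 2) * (1 + (y / R) ^ 2)⁻¹ := by rw [pow_add]; field_simp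

theorem integrable_one_div_vertical_pow (hR : 0 < R) (hn : n ≠ 0) :
    Integrable fun y : ℝ => 1 / ((R : ℂ) + y * I) ^ (n + 1) := by
  obtain ⟨m, rfl⟩ := Nat.exists_eq_succ_of_ne_zero hn
  exact ((integrable_inv_one_add_sq.comp_div hR.ne').const_mul (1 / R ^ (m + 2))).mono'
    (continuous_one_div_vertical_pow hR _).aestronglyMeasurable
    (.of_forall (norm_one_div_vertical_pow_le hR m))

/-- The function `x ^ n * exp (-R * x)` of `x ≥ 0` extended by zero, i.e. the density of a Gamma
distribution up to normalization. -/
noncomputable def gammaKernel (R : ℝ) (n : ℕ) (x : ℝ) : ℂ := (max x 0 : ℝ) ^ n * cexp (-R * x)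

theorem gammaKernel_eq_indicator (hn : n ≠ 0) :
    gammaKernel R n = (Ioi 0).indicator fun x : ℝ => (x : ℂ) ^ n * cexp (-R * x) := by
  funext x
  rcases le_or_gt x 0 with hx | hx
  · simp [gammaKernel, hx, hn]
  · simp [gammaKernel, hx, max_eq_left hx.le]

theorem continuous_gammaKernel : Continuous (gammaKernel R n) := by
  unfold gammaKernel
  fun_prop

theorem integrable_gammaKernel (hR : 0 < R) (hn : n ≠ 0) : Integrable (gammaKernel R n) := by
  rw [gammaKernel_eq_indicator hn, integrable_indicator_iff measurableSet_Ioi]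
  exact integrableOn_pow_mul_cexp_neg_mul (z := R) hR n

theorem fourier_gammaKernel (hR : 0 < R) (hn : n ≠ 0) (w : ℝ) :
    𝓕 (gammaKernel R n) w = n ! * (1 / ((R : ℂ) + (2 * Real.pi * w : ℝ) * I) ^ (n + 1)) := by
  have hz : 0 < ((R : ℂ) + (2 * Real.pi * w : ℝ) * I).re := by simpa using hR
  rw [Real.fourier_real_eq_integral_exp_smul, gammaKernel_eq_indicator hn, mul_one_div,
    ← integral_pow_mul_cexp_neg_mul hz, ← integral_indicator measurableSet_Ioi]
  congr 1 with x
  by_cases hx : x ∈ Ioi (0 : ℝ)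
  · rw [indicator_of_mem hx, indicator_of_mem hx, smul_eq_mul, mul_left_comm, ← Complex.exp_add]
    congr 2
    push_cast
    ring
  · rw [indicator_of_notMem hx, indicator_of_notMem hx, smul_zero]

theorem integrable_fourier_gammaKernel (hR : 0 < R) (hn : n ≠ 0) :
    Integrable (𝓕 (gammaKernel R n)) := by
  rw [funext (fourier_gammaKernel hR hn)]
  exact ((integrable_one_div_vertical_pow hR hn).comp_mul_left' Real.two_pi_pos.ne').const_mul _

theorem pow_eq_integral_vertical (hR : 0 < R) (hn : n ≠ 0) {k : ℝ} (hk : 0 ≤ k) :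
    (k : ℂ) ^ n = n ! / (2 * Real.pi) *
      ∫ y : ℝ, cexp (k * (R + y * I)) / (R + y * I) ^ (n + 1) := by
  set g : ℝ → ℂ := fun y => cexp (k * (R + y * I)) / (R + y * I) ^ (n + 1)
  have inversion := congrFun (continuous_gammaKernel.fourierInv_fourier_eq
    (integrable_gammaKernel hR hn) (integrable_fourier_gammaKernel hR hn)) k
  rw [Real.fourierInv_eq', gammaKernel, max_eq_left hk] at inversion
  have integrand (v : ℝ) : cexp (R * k) * (cexp ((2 * Real.pi * inner ℝ v k : ℝ) * I) •
      𝓕 (gammaKernel R n) v) = n ! * g (2 * Real.pi * v) := by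
    have hexponent : (k : ℂ) * (R + (2 * Real.pi * v : ℝ) * I) =
        R * k + (2 * Real.pi * inner ℝ v k : ℝ) * I := by
      simp only [RCLike.inner_apply, conj_trivial]
      push_cast
      ring
    simp only [g]
    rw [fourier_gammaKernel hR hn, smul_eq_mul, hexponent, Complex.exp_add]
    ring
  calc (k : ℂ) ^ n = cexp (R * k) * ((k : ℂ) ^ n * cexp (-R * k)) := by
        rw [mul_left_comm, ← Complex.exp_add]; simp
    _ = ∫ v : ℝ, n ! * g (2 * Real.pi * v) := by
        rw [← inversion, ← integral_const_mul]
        exact integral_congr_ae (.of_forall integrand)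
    _ = n ! / (2 * Real.pi) * ∫ y : ℝ, g y := by
        rw [integral_const_mul, Measure.integral_comp_mul_left g,
          abs_of_pos (inv_pos.mpr Real.two_pi_pos), real_smul]
        push_cast
        ring

theorem hasSum_cexp_nat_mul_div_factorial (z : ℂ) :
    HasSum (fun k : ℕ => cexp (k * z) / (k ! : ℂ)) (cexp (cexp z)) := by
  simpa only [← exp_eq_exp_ℂ, ← Complex.exp_nat_mul] using
    NormedSpace.expSeries_div_hasSum_exp (cexp z)

theorem exp_one_mul_bell_eq_integral_vertical (hR : 0 < R) (hn : n ≠ 0) :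
    ((Real.exp 1 * Bell n : ℝ) : ℂ) = n ! / (2 * Real.pi) *
      ∫ y : ℝ, cexp (cexp (R + y * I)) * (1 / (R + y * I) ^ (n + 1)) := by
  set F : ℕ → ℝ → ℂ := fun k y => cexp (k * (R + y * I)) / (k ! : ℂ) * (1 / (R + y * I) ^ (n + 1))
  have hkernel := integrable_one_div_vertical_pow hR hn
  have hnorm (k : ℕ) (y : ℝ) :
      ‖cexp (k * (R + y * I)) / (k ! : ℂ)‖ = Real.exp R ^ k / k ! := by
    rw [norm_div, norm_exp, ← Real.exp_nat_mul]
    simp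
  have hF_int (k : ℕ) : Integrable (F k) :=
    hkernel.bdd_mul (Continuous.aestronglyMeasurable (by fun_prop))
      (.of_forall fun y => (hnorm k y).le)
  have hF_summable : Summable fun k => ∫ y, ‖F k y‖ := by
    simp only [F, norm_mul, hnorm, integral_const_mul]
    exact (Real.summable_pow_div_factorial _).mul_right _
  have hF_sum := (hasSum_integral_of_summable_integral_norm hF_int hF_summable).mul_left
    ((n ! : ℂ) / (2 * Real.pi))
  have hF_tsum (y : ℝ) : ∑' k, F k y = cexp (cexp (R + y * I)) * (1 / (R + y * I) ^ (n + 1)) :=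
    ((hasSum_cexp_nat_mul_div_factorial _).mul_right _).tsum_eq
  have hF_integral (k : ℕ) :
      (((k : ℝ) ^ n / k ! : ℝ) : ℂ) = n ! / (2 * Real.pi) * ∫ y, F k y := by
    have hpow := pow_eq_integral_vertical hR hn k.cast_nonneg
    push_cast at hpow ⊢
    rw [hpow, mul_div_assoc, ← integral_div]
    congr 2 with y
    simp only [F]
    ring
  simp only [hF_tsum, ← hF_integral] at hF_sum
  exact (hasSum_ofReal.mpr (hasSum_dobinski n)).unique hF_sum

theorem integrable_cexp_cexp_vertical (hR : 0 < R) (hn : n ≠ 0) :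
    Integrable fun y : ℝ => cexp (cexp (R + y * I)) * (1 / (R + y * I) ^ (n + 1)) := by
  refine (integrable_one_div_vertical_pow hR hn).bdd_mul (c := Real.exp (Real.exp R))
    (Continuous.aestronglyMeasurable (by fun_prop)) (.of_forall fun y => ?_)
  rw [norm_exp, Real.exp_le_exp]
  exact (re_le_norm _).trans_eq (by simp [norm_exp])

/-- With `z = R + y * I`, the real part of `exp z - N * log z` is smaller than its value at
`y = 0` by `decay (exp R) N R y`. -/
noncomputable def decay (L N R y : ℝ) : ℝ :=
  L * (1 - Real.cos y) + N / 2 * Real.log (1 + (y / R) ^ 2)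

/-- The imaginary part of `exp z - N * log z` at `z = R + y * I`, when `L = exp R`. -/
noncomputable def phase (L N R y : ℝ) : ℝ := L * Real.sin y - N * Real.arctan (y / R)

theorem ofReal_add_mul_I_eq_cexp (hR : 0 < R) (y : ℝ) :
    (R : ℂ) + y * I = cexp ((Real.log R + Real.log (1 + (y / R) ^ 2) / 2 : ℝ) +
      Real.arctan (y / R) * I) := by
  have hpos : (0 : ℝ) < 1 + (y / R) ^ 2 := by positivity
  have hmod : Real.exp (Real.log R + Real.log (1 + (y / R) ^ 2) / 2) = R * √(1 + (y / R) ^ 2) := by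
    rw [Real.exp_add, Real.exp_log hR, Real.exp_half, Real.exp_log hpos]
  rw [Complex.exp_add_mul_I, ← ofReal_exp, ← ofReal_cos, ← ofReal_sin, hmod, Real.cos_arctan,
    Real.sin_arctan]
  have hR' : (R : ℂ) ≠ 0 := ofReal_ne_zero.mpr hR.ne'
  have hsqrt : (√(1 + (y / R) ^ 2) : ℂ) ≠ 0 := ofReal_ne_zero.mpr (by positivity)
  set r := √(1 + (y / R) ^ 2)
  push_cast
  field_simp

theorem re_cexp_cexp_vertical (hR : 0 < R) (n : ℕ) (y : ℝ) :
    (cexp (cexp (R + y * I)) * (1 / (R + y * I) ^ (n + 1))).re =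
      Real.exp (Real.exp R) / R ^ (n + 1) * (Real.exp (-decay (Real.exp R) (n + 1) R y) *
        Real.cos (phase (Real.exp R) (n + 1) R y)) := by
  have hexp : cexp (R + y * I) =
      (Real.exp R * Real.cos y : ℝ) + (Real.exp R * Real.sin y : ℝ) * I := by
    rw [Complex.exp_add_mul_I]
    push_cast
    ring
  have hpolar : cexp (cexp (R + y * I)) * (1 / (R + y * I) ^ (n + 1)) =
      cexp ((Real.exp R - (n + 1) * Real.log R - decay (Real.exp R) (n + 1) R y : ℝ) +
        (phase (Real.exp R) (n + 1) R y : ℝ) * I) := by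
    rw [hexp, ofReal_add_mul_I_eq_cexp hR y, ← Complex.exp_nat_mul, one_div, ← Complex.exp_neg,
      ← Complex.exp_add, phase, decay]
    congr 1
    push_cast
    ring
  have hpow : R ^ (n + 1) = Real.exp ((n + 1) * Real.log R) := by
    rw [← Real.exp_log (pow_pos hR _), Real.log_pow]
    push_cast
    rfl
  rw [hpolar, Complex.exp_add_mul_I, ← ofReal_exp, ← ofReal_cos, ← ofReal_sin, re_ofReal_mul, hpow,
    ← Real.exp_sub, ← mul_assoc, ← Real.exp_add]
  simp [sub_eq_add_neg, -ofReal_cos, -ofReal_sin]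

theorem integrable_exp_neg_decay_mul_cos_phase (hR : 0 < R) (hn : n ≠ 0) :
    Integrable fun y : ℝ => Real.exp (-decay (Real.exp R) (n + 1) R y) *
      Real.cos (phase (Real.exp R) (n + 1) R y) := by
  have hre := (integrable_cexp_cexp_vertical hR hn).re
  simp only [RCLike.re_eq_complex_re, re_cexp_cexp_vertical hR n] at hre
  exact (integrable_const_mul_iff (IsUnit.mk0 _ (by positivity)) _).mp hre

theorem bell_eq_integral (hR : 0 < R) (hn : n ≠ 0) :
    (Bell n : ℝ) = n ! * Real.exp (Real.exp R - 1) / (2 * Real.pi * R ^ (n + 1)) *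
      ∫ y : ℝ, Real.exp (-decay (Real.exp R) (n + 1) R y) *
        Real.cos (phase (Real.exp R) (n + 1) R y) := by
  have hre := integral_re (integrable_cexp_cexp_vertical hR hn)
  simp only [RCLike.re_eq_complex_re, re_cexp_cexp_vertical hR n, integral_const_mul] at hre
  have hbell := congrArg re (exp_one_mul_bell_eq_integral_vertical hR hn)
  rw [← ofReal_natCast n !, ← ofReal_ofNat 2, ← ofReal_mul, ← ofReal_div, re_ofReal_mul, ← hre,
    ofReal_re] at hbell
  rw [Real.exp_sub]
  field_simp at hbell ⊢
  linarith

end VerticalLine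

/-! ### Elementary inequalities -/

theorem nonneg_of_hasDerivAt_nonneg {f f' : ℝ → ℝ} (hzero : f 0 = 0)
    (hderiv : ∀ x, 0 ≤ x → HasDerivAt f (f' x) x) (hnonneg : ∀ x, 0 ≤ x → 0 ≤ f' x)
    {x : ℝ} (hx : 0 ≤ x) : 0 ≤ f x := by
  have hmono : MonotoneOn f (Ici 0) :=
    monotoneOn_of_hasDerivWithinAt_nonneg (convex_Ici 0)
      (fun y hy => (hderiv y hy).continuousAt.continuousWithinAt)
      (fun y hy => (hderiv y (interior_subset hy)).hasDerivWithinAt)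
      (fun y hy => hnonneg y (interior_subset hy))
  exact hzero ▸ hmono self_mem_Ici hx hx

theorem cos_le_taylor_four (x : ℝ) : Real.cos x ≤ 1 - x ^ 2 / 2 + x ^ 4 / 24 := by
  have hderiv (t : ℝ) : HasDerivAt (fun t => 1 - t ^ 2 / 2 + t ^ 4 / 24 - Real.cos t)
      (Real.sin t - (t - t ^ 3 / 6)) t := by
    refine (((((hasDerivAt_pow 2 t).div_const 2).const_sub 1).add
      ((hasDerivAt_pow 4 t).div_const 24)).sub (Real.hasDerivAt_cos t)).congr_deriv ?_
    norm_num
    ring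
  have h := nonneg_of_hasDerivAt_nonneg (by simp) (fun t _ => hderiv t)
    (fun t ht => sub_nonneg.mpr (Real.sin_ge_sub_cube ht)) (abs_nonneg x)
  rw [Real.cos_abs, sq_abs, (by decide : Even 4).pow_abs] at h
  linarith

theorem sin_le_taylor_five {x : ℝ} (hx : 0 ≤ x) : Real.sin x ≤ x - x ^ 3 / 6 + x ^ 5 / 120 := by
  have hderiv (t : ℝ) : HasDerivAt (fun t => t - t ^ 3 / 6 + t ^ 5 / 120 - Real.sin t)
      (1 - t ^ 2 / 2 + t ^ 4 / 24 - Real.cos t) t := by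
    refine ((((hasDerivAt_id t).sub ((hasDerivAt_pow 3 t).div_const 6)).add
      ((hasDerivAt_pow 5 t).div_const 120)).sub (Real.hasDerivAt_sin t)).congr_deriv ?_
    norm_num
    ring
  have h := nonneg_of_hasDerivAt_nonneg (by simp) (fun t _ => hderiv t)
    (fun t _ => sub_nonneg.mpr (cos_le_taylor_four t)) hx
  linarith

theorem arctan_le_self {x : ℝ} (hx : 0 ≤ x) : Real.arctan x ≤ x :=
  (Real.le_tan (Real.arctan_nonneg.mpr hx) (Real.arctan_lt_pi_div_two x)).trans_eq
    (Real.tan_arctan x)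

theorem sub_cube_le_arctan {x : ℝ} (hx : 0 ≤ x) : x - x ^ 3 / 3 ≤ Real.arctan x := by
  have hderiv (t : ℝ) : HasDerivAt (fun t => Real.arctan t - (t - t ^ 3 / 3))
      (t ^ 4 / (1 + t ^ 2)) t := by
    refine ((Real.hasDerivAt_arctan t).sub
      ((hasDerivAt_id t).sub ((hasDerivAt_pow 3 t).div_const 3))).congr_deriv ?_
    have : 1 + t ^ 2 ≠ 0 := by positivity
    field_simp
    norm_num
    ring
  have h := nonneg_of_hasDerivAt_nonneg (by simp) (fun t _ => hderiv t)
    (fun t _ => by positivity) hx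
  linarith

theorem sub_sq_div_two_le_log_one_add {x : ℝ} (hx : 0 ≤ x) :
    x - x ^ 2 / 2 ≤ Real.log (1 + x) := by
  refine le_trans ?_ (Real.le_log_one_add_of_nonneg hx)
  rw [le_div_iff₀ (by positivity)]
  nlinarith [pow_nonneg hx 3]

theorem exp_le_one_add_add_sq_mul_exp {x : ℝ} (hx : 0 ≤ x) :
    Real.exp x ≤ 1 + x + x ^ 2 / 2 * Real.exp x := by
  have hderiv (t : ℝ) : HasDerivAt (fun t => (1 + t) * Real.exp (-t) + t ^ 2 / 2 - 1)
      (t * (1 - Real.exp (-t))) t := by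
    refine (((((hasDerivAt_id t).const_add 1).mul (hasDerivAt_neg t).exp).add
      ((hasDerivAt_pow 2 t).div_const 2)).sub_const 1).congr_deriv ?_
    norm_num
    ring
  have h := nonneg_of_hasDerivAt_nonneg (by simp) (fun t _ => hderiv t)
    (fun t ht => mul_nonneg ht (sub_nonneg.mpr (Real.exp_le_one_iff.mpr (by linarith)))) hx
  calc Real.exp x ≤ Real.exp x + ((1 + x) * Real.exp (-x) + x ^ 2 / 2 - 1) * Real.exp x :=
        le_add_of_nonneg_right (mul_nonneg h (Real.exp_pos x).le)
    _ = 1 + x + x ^ 2 / 2 * Real.exp x := by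
        rw [Real.exp_neg]
        field_simp
        ring

/-! ### Gaussian moments -/

theorem integrable_pow_mul_exp_neg_mul_sq {c : ℝ} (hc : 0 < c) (k : ℕ) :
    Integrable fun y : ℝ => y ^ k * Real.exp (-(c / 2) * y ^ 2) := by
  simpa using integrable_rpow_mul_exp_neg_mul_sq (b := c / 2) (by positivity) (s := k)
    (by linarith [(Nat.cast_nonneg k : (0 : ℝ) ≤ k)])

theorem integral_pow_add_two_mul_exp_neg_mul_sq {c : ℝ} (hc : 0 < c) (k : ℕ) :
    ∫ y : ℝ, y ^ (k + 2) * Real.exp (-(c / 2) * y ^ 2) =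
      (k + 1) / c * ∫ y : ℝ, y ^ k * Real.exp (-(c / 2) * y ^ 2) := by
  have hk := (integrable_pow_mul_exp_neg_mul_sq hc k).const_mul (k + 1 : ℝ)
  have hk2 := (integrable_pow_mul_exp_neg_mul_sq hc (k + 2)).const_mul c
  have hderiv (y : ℝ) : HasDerivAt (fun y : ℝ => y ^ (k + 1) * Real.exp (-(c / 2) * y ^ 2))
      ((k + 1 : ℝ) * (y ^ k * Real.exp (-(c / 2) * y ^ 2)) -
        c * (y ^ (k + 2) * Real.exp (-(c / 2) * y ^ 2))) y := by
    refine ((hasDerivAt_pow (k + 1) y).mul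
      ((hasDerivAt_pow 2 y).const_mul (-(c / 2))).exp).congr_deriv ?_
    simp only [Nat.add_sub_cancel]
    push_cast
    ring
  have h := integral_eq_zero_of_hasDerivAt_of_integrable hderiv (hk.sub hk2)
    (integrable_pow_mul_exp_neg_mul_sq hc (k + 1))
  rw [integral_sub hk hk2, integral_const_mul, integral_const_mul] at h
  rw [div_mul_eq_mul_div, eq_div_iff hc.ne']
  linarith

theorem integral_even_pow_mul_exp_neg_mul_sq {c : ℝ} (hc : 0 < c) (k : ℕ) :
    ∫ y : ℝ, y ^ (2 * k) * Real.exp (-(c / 2) * y ^ 2) =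
      (2 * k - 1 : ℕ)‼ / c ^ k * √(2 * Real.pi / c) := by
  induction k with
  | zero =>
    have : Real.pi / (c / 2) = 2 * Real.pi / c := by field_simp
    simpa [this] using integral_gaussian (c / 2)
  | succ k ih =>
    have hfact : ((2 * (k + 1) - 1 : ℕ)‼ : ℝ) = (2 * k + 1) * (2 * k - 1 : ℕ)‼ := by
      rcases k with _ | k
      · simp
      · rw [show 2 * (k + 1 + 1) - 1 = 2 * (k + 1) - 1 + 2 by omega, Nat.doubleFactorial_add_two,
          show 2 * (k + 1) - 1 + 2 = 2 * (k + 1) + 1 by omega]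
        push_cast
        ring
    rw [mul_add_one, integral_pow_add_two_mul_exp_neg_mul_sq hc, ih, ← mul_add_one, hfact]
    push_cast
    field_simp
    ring

/-! ### Bounds for the integrand -/

section SaddlePoint

variable {L R w p q s y : ℝ}

/-- `L * curvature R` is the second derivative of `decay L (R * L) R` at `0`. -/
noncomputable def curvature (R : ℝ) : ℝ := 1 + 1 / R

/-- `-L * cubicCoeff R` is the coefficient of `y ^ 3` in the Taylor expansion of
`phase L (R * L) R` at `0`; the saddle-point condition `N = R * L` makes the linear one vanish. -/
noncomputable def cubicCoeff (R : ℝ) : ℝ := 1 / 6 - 1 / (3 * R ^ 2)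

/-- `-L * quarticCoeff R` is the coefficient of `y ^ 4` in the Taylor expansion of
`decay L (R * L) R` at `0`. -/
noncomputable def quarticCoeff (R : ℝ) : ℝ := 1 / 24 + 1 / (4 * R ^ 3)

theorem decay_le (hL : 0 ≤ L) (hR : 0 < R) (y : ℝ) :
    decay L (R * L) R y ≤ L * curvature R / 2 * y ^ 2 := by
  have hcos : 1 - Real.cos y ≤ y ^ 2 / 2 := by linarith [Real.one_sub_sq_div_two_le_cos (x := y)]
  have hlog : Real.log (1 + (y / R) ^ 2) ≤ (y / R) ^ 2 := by
    linarith [Real.log_le_sub_one_of_pos (by positivity : 0 < 1 + (y / R) ^ 2)]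
  calc decay L (R * L) R y ≤ L * (y ^ 2 / 2) + R * L / 2 * (y / R) ^ 2 := by rw [decay]; gcongr
    _ = L * curvature R / 2 * y ^ 2 := by rw [curvature]; field_simp

theorem le_decay (hL : 0 ≤ L) (hR : 0 < R) (y : ℝ) :
    L * curvature R / 2 * y ^ 2 - L * quarticCoeff R * y ^ 4 ≤ decay L (R * L) R y := by
  have hcos : y ^ 2 / 2 - y ^ 4 / 24 ≤ 1 - Real.cos y := by linarith [cos_le_taylor_four y]
  have hlog := sub_sq_div_two_le_log_one_add (by positivity : 0 ≤ (y / R) ^ 2)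
  calc L * curvature R / 2 * y ^ 2 - L * quarticCoeff R * y ^ 4
      = L * (y ^ 2 / 2 - y ^ 4 / 24) + R * L / 2 * ((y / R) ^ 2 - ((y / R) ^ 2) ^ 2 / 2) := by
        rw [curvature, quarticCoeff]; field_simp; ring
    _ ≤ decay L (R * L) R y := by rw [decay]; gcongr

theorem neg_phase_le (hL : 0 ≤ L) (hR : 0 < R) (hy : 0 ≤ y) :
    -phase L (R * L) R y ≤ L * y ^ 3 / 6 := by
  have hsin : L * (y - y ^ 3 / 6) ≤ L * Real.sin y := by gcongr; exact Real.sin_ge_sub_cube hy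
  have harctan : R * L * Real.arctan (y / R) ≤ R * L * (y / R) := by
    gcongr; exact arctan_le_self (by positivity)
  have hlinear : R * L * (y / R) = L * y := by field_simp
  rw [phase]
  linarith

theorem le_neg_phase (hL : 0 ≤ L) (hR : 0 < R) (hy : 0 ≤ y) :
    L * y ^ 3 * (cubicCoeff R - y ^ 2 / 120) ≤ -phase L (R * L) R y := by
  have hsin : L * Real.sin y ≤ L * (y - y ^ 3 / 6 + y ^ 5 / 120) := by
    gcongr; exact sin_le_taylor_five hy
  have harctan : R * L * (y / R - (y / R) ^ 3 / 3) ≤ R * L * Real.arctan (y / R) := by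
    gcongr; exact sub_cube_le_arctan (by positivity)
  have hcubic : L * y ^ 3 * (cubicCoeff R - y ^ 2 / 120) =
      R * L * (y / R - (y / R) ^ 3 / 3) - L * (y - y ^ 3 / 6 + y ^ 5 / 120) := by
    rw [cubicCoeff]; field_simp; ring
  rw [phase]
  linarith

theorem le_one_sub_cos_of_cubic_bounds {b : ℝ} (hL : 0 ≤ L) (hp : 1 / 120 ≤ p) (hy0 : 0 ≤ y)
    (hy1 : y ≤ 1) (hlower : L * y ^ 3 * (p - y ^ 2 / 120) ≤ b) (hupper : b ≤ L * y ^ 3 / 6) :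
    L ^ 2 * p ^ 2 / 2 * y ^ 6 - L ^ 2 * p / 120 * y ^ 8 - L ^ 4 / 31104 * y ^ 12 ≤
      1 - Real.cos b := by
  have hp' : 0 ≤ p - y ^ 2 / 120 := by nlinarith
  have hlower0 : 0 ≤ L * y ^ 3 * (p - y ^ 2 / 120) := by positivity
  have hb0 : 0 ≤ b := hlower0.trans hlower
  calc L ^ 2 * p ^ 2 / 2 * y ^ 6 - L ^ 2 * p / 120 * y ^ 8 - L ^ 4 / 31104 * y ^ 12
      ≤ (L * y ^ 3 * (p - y ^ 2 / 120)) ^ 2 / 2 - (L * y ^ 3 / 6) ^ 4 / 24 := by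
        nlinarith [sq_nonneg (L * y ^ 3 * (y ^ 2 / 120))]
    _ ≤ b ^ 2 / 2 - b ^ 4 / 24 := by gcongr
    _ ≤ 1 - Real.cos b := by linarith [cos_le_taylor_four b]

theorem exp_neg_le_of_quartic_lower {A c : ℝ} (hq : 0 ≤ q) (hqc : 2 * q ≤ (1 - s) * c)
    (hy : y ^ 2 ≤ 1) (hA : c / 2 * y ^ 2 - q * y ^ 4 ≤ A) :
    Real.exp (-A) ≤ Real.exp (-(c / 2) * y ^ 2) * (1 + q * y ^ 4) +
      q ^ 2 / 2 * (y ^ 8 * Real.exp (-(s * c / 2) * y ^ 2)) := by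
  have hbroad : Real.exp (-(c / 2) * y ^ 2) * Real.exp (q * y ^ 4) ≤
      Real.exp (-(s * c / 2) * y ^ 2) := by
    rw [← Real.exp_add, Real.exp_le_exp]
    have hy4 : q * y ^ 4 ≤ q * y ^ 2 := by
      gcongr ?_ * ?_
      nlinarith [sq_nonneg y]
    nlinarith [mul_le_mul_of_nonneg_right hqc (sq_nonneg y)]
  calc Real.exp (-A) ≤ Real.exp (-(c / 2) * y ^ 2) * Real.exp (q * y ^ 4) := by
        rw [← Real.exp_add, Real.exp_le_exp]; linarith
    _ ≤ Real.exp (-(c / 2) * y ^ 2) *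
          (1 + q * y ^ 4 + (q * y ^ 4) ^ 2 / 2 * Real.exp (q * y ^ 4)) := by
        gcongr; exact exp_le_one_add_add_sq_mul_exp (by positivity)
    _ = Real.exp (-(c / 2) * y ^ 2) * (1 + q * y ^ 4) +
          q ^ 2 / 2 * (y ^ 8 * (Real.exp (-(c / 2) * y ^ 2) * Real.exp (q * y ^ 4))) := by ring
    _ ≤ _ := by gcongr

/-- The majorant near `y = 0` of `exp (-A) * cos b` when `A = L * (w / 2 * y ^ 2 - q * y ^ 4) + ⋯`
and `b = L * p * y ^ 3 + ⋯`: the Gaussian times the expansion of the two remaining factors. The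
last term, a Gaussian broadened by `s < 1`, absorbs the second-order error of `exp (L * q * y ^ 4)`.
The constants come from `y ^ 5 / 5!` in `b` and from `b ^ 4 / 4!` with `b ≤ L * y ^ 3 / 6`. -/
noncomputable def saddleMajorant (L w p q s y : ℝ) : ℝ :=
  Real.exp (-(L * w / 2) * y ^ 2) * (1 + L * q * y ^ 4 - L ^ 2 * p ^ 2 / 2 * y ^ 6 +
    L ^ 2 * p / 120 * y ^ 8 + L ^ 4 / 31104 * y ^ 12) +
  (L * q) ^ 2 / 2 * (y ^ 8 * Real.exp (-(s * (L * w) / 2) * y ^ 2))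

theorem exp_neg_mul_cos_le_saddleMajorant {A b : ℝ} (hL : 0 ≤ L) (hp : 1 / 120 ≤ p) (hq : 0 ≤ q)
    (hqw : 2 * q ≤ (1 - s) * w) (hy0 : 0 ≤ y) (hy1 : y ≤ 1)
    (hA : A ≤ L * w / 2 * y ^ 2) (hA' : L * w / 2 * y ^ 2 - L * q * y ^ 4 ≤ A)
    (hb : b ≤ L * y ^ 3 / 6) (hb' : L * y ^ 3 * (p - y ^ 2 / 120) ≤ b) :
    Real.exp (-A) * Real.cos b ≤ saddleMajorant L w p q s y := by
  have hexp := exp_neg_le_of_quartic_lower (by positivity : 0 ≤ L * q)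
    (by nlinarith : 2 * (L * q) ≤ (1 - s) * (L * w)) (by nlinarith) hA'
  have hcos := le_one_sub_cos_of_cubic_bounds hL hp hy0 hy1 hb' hb
  have hcos0 : 0 ≤ 1 - Real.cos b := by linarith [Real.cos_le_one b]
  have hgauss : Real.exp (-(L * w / 2) * y ^ 2) ≤ Real.exp (-A) := by
    rw [Real.exp_le_exp]; linarith
  calc Real.exp (-A) * Real.cos b = Real.exp (-A) - Real.exp (-A) * (1 - Real.cos b) := by ring
    _ ≤ Real.exp (-(L * w / 2) * y ^ 2) * (1 + L * q * y ^ 4) +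
          (L * q) ^ 2 / 2 * (y ^ 8 * Real.exp (-(s * (L * w) / 2) * y ^ 2)) -
        Real.exp (-(L * w / 2) * y ^ 2) *
          (L ^ 2 * p ^ 2 / 2 * y ^ 6 - L ^ 2 * p / 120 * y ^ 8 - L ^ 4 / 31104 * y ^ 12) :=
        sub_le_sub hexp ((mul_le_mul_of_nonneg_left hcos (Real.exp_pos _).le).trans
          (mul_le_mul_of_nonneg_right hgauss hcos0))
    _ = saddleMajorant L w p q s y := by rw [saddleMajorant]; ring

theorem saddleMajorant_nonneg (hL : 21 ≤ L) (hp0 : 0 ≤ p) (hp : p ≤ 1 / 6) (hq : 0 ≤ q)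
    (hy : 1 ≤ y) : 0 ≤ saddleMajorant L w p q s y := by
  have hsextic : L ^ 2 * p ^ 2 / 2 * y ^ 6 ≤ L ^ 4 / 31104 * y ^ 12 := by
    have hcoeff : L ^ 2 * p ^ 2 / 2 ≤ L ^ 4 / 31104 := by
      calc L ^ 2 * p ^ 2 / 2 ≤ L ^ 2 * (1 / 6) ^ 2 / 2 := by gcongr
        _ = L ^ 2 * 432 / 31104 := by ring
        _ ≤ L ^ 2 * L ^ 2 / 31104 := by gcongr; nlinarith
        _ = L ^ 4 / 31104 := by ring
    gcongr
    norm_num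
  have hpoly : 0 ≤ 1 + L * q * y ^ 4 - L ^ 2 * p ^ 2 / 2 * y ^ 6 + L ^ 2 * p / 120 * y ^ 8 +
      L ^ 4 / 31104 * y ^ 12 := by
    have : 0 ≤ 1 + L * q * y ^ 4 + L ^ 2 * p / 120 * y ^ 8 := by positivity
    linarith
  rw [saddleMajorant]
  positivity

theorem two_mul_div_le_decay_sub_log (hR : 9 / 2 ≤ R) (hRL : R ≤ L) (hy : 1 ≤ y) :
    2 * L / R ≤ decay L (R * L) R y - Real.log (1 + (y / R) ^ 2) := by
  have hR0 : 0 < R := by linarith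
  have hL0 : 0 < L := by linarith
  have hone_add : 1 ≤ 1 + (y / R) ^ 2 := le_add_of_nonneg_right (sq_nonneg _)
  have hweight : 0 ≤ R * L / 2 - 1 := by nlinarith
  suffices 2 * L / R ≤ L * (1 - Real.cos y) + (R * L / 2 - 1) * Real.log (1 + (y / R) ^ 2) by
    rw [decay]; linarith
  rcases le_or_gt y Real.pi with hpi | hpi
  · have hcos : 4 / 9 ≤ 1 - Real.cos y := by
      linarith [Real.cos_le_cos_of_nonneg_of_le_pi zero_le_one hpi hy, Real.cos_one_le]
    calc 2 * L / R ≤ L * (4 / 9) := by rw [div_le_iff₀ hR0]; nlinarith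
      _ ≤ L * (1 - Real.cos y) := by gcongr
      _ ≤ _ := le_add_of_nonneg_right (mul_nonneg hweight (Real.log_nonneg hone_add))
  · have hlog : 9 / (R ^ 2 + 9) ≤ Real.log (1 + (y / R) ^ 2) := by
      have hy3 : 3 ≤ y := (Real.pi_gt_three.trans hpi).le
      calc 9 / (R ^ 2 + 9) = 1 - (1 + (3 / R) ^ 2)⁻¹ := by field_simp; ring
        _ ≤ 1 - (1 + (y / R) ^ 2)⁻¹ := by gcongr
        _ ≤ _ := Real.one_sub_inv_le_log_of_pos (by positivity)
    calc 2 * L / R ≤ (R * L / 2 - 1) * (9 / (R ^ 2 + 9)) := by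
          rw [← mul_div_assoc, div_le_div_iff₀ hR0 (by positivity)]
          have hR2 : 20 ≤ R ^ 2 := by nlinarith
          nlinarith [mul_le_mul_of_nonneg_left hR2 hL0.le]
      _ ≤ (R * L / 2 - 1) * Real.log (1 + (y / R) ^ 2) := by gcongr
      _ ≤ _ := le_add_of_nonneg_left (mul_nonneg hL0.le (by linarith [Real.cos_le_one y]))

theorem exp_neg_decay_mul_cos_le_of_one_le (hR : 9 / 2 ≤ R) (hRL : R ≤ L) (hy : 1 ≤ y) (b : ℝ) :
    Real.exp (-decay L (R * L) R y) * Real.cos b ≤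
      Real.exp (-(2 * L / R)) * (1 + (y / R) ^ 2)⁻¹ := by
  have hone_add : 0 < 1 + (y / R) ^ 2 := by positivity
  calc Real.exp (-decay L (R * L) R y) * Real.cos b ≤ Real.exp (-decay L (R * L) R y) :=
        mul_le_of_le_one_right (Real.exp_pos _).le (Real.cos_le_one b)
    _ ≤ Real.exp (-(2 * L / R) + -Real.log (1 + (y / R) ^ 2)) := by
        rw [Real.exp_le_exp]
        linarith [two_mul_div_le_decay_sub_log hR hRL hy]
    _ = _ := by rw [Real.exp_add, Real.exp_neg (Real.log _), Real.exp_log hone_add]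

theorem one_le_curvature (hR : 0 ≤ R) : 1 ≤ curvature R :=
  le_add_of_nonneg_right (by positivity)

theorem curvature_le (hR : 4.6 ≤ R) : curvature R ≤ 1.22 := by
  have : 1 / R ≤ 1 / 4.6 := by gcongr
  rw [curvature]
  linarith

theorem cubicCoeff_le (R : ℝ) : cubicCoeff R ≤ 1 / 6 :=
  sub_le_self _ (by positivity)

theorem le_cubicCoeff (hR : 4.6 ≤ R) : 1 / 120 ≤ cubicCoeff R := by
  have : 1 / (3 * R ^ 2) ≤ 1 / (3 * 4.6 ^ 2) := by gcongr
  rw [cubicCoeff]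
  linarith

theorem quarticCoeff_nonneg (hR : 0 ≤ R) : 0 ≤ quarticCoeff R := by
  rw [quarticCoeff]
  positivity

theorem quarticCoeff_le (hR : 4.6 ≤ R) : quarticCoeff R ≤ 0.04424 := by
  have : 1 / (4 * R ^ 3) ≤ 1 / (4 * 4.6 ^ 3) := by gcongr
  rw [quarticCoeff]
  linarith

theorem decay_abs (L N R y : ℝ) : decay L N R |y| = decay L N R y := by
  rw [decay, decay, Real.cos_abs, div_pow, div_pow, sq_abs]

theorem cos_phase_abs (L N R y : ℝ) : Real.cos (phase L N R |y|) = Real.cos (phase L N R y) := by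
  rcases abs_choice y with h | h
  · rw [h]
  · have hodd : phase L N R (-y) = -phase L N R y := by
      rw [phase, phase, Real.sin_neg, neg_div, Real.arctan_neg]; ring
    rw [h, hodd, Real.cos_neg]

theorem saddleMajorant_abs (L w p q s y : ℝ) :
    saddleMajorant L w p q s |y| = saddleMajorant L w p q s y := by
  rw [saddleMajorant, saddleMajorant, sq_abs, (by decide : Even 4).pow_abs,
    (by decide : Even 6).pow_abs, (by decide : Even 8).pow_abs, (by decide : Even 12).pow_abs]

theorem exp_neg_decay_mul_cos_phase_le (hR : 4.6 ≤ R) (hRL : R ≤ L) (hL : 21 ≤ L) (y : ℝ) :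
    Real.exp (-decay L (R * L) R y) * Real.cos (phase L (R * L) R y) ≤
      saddleMajorant L (curvature R) (cubicCoeff R) (quarticCoeff R) 0.91 y +
        Real.exp (-(2 * L / R)) * (1 + (y / R) ^ 2)⁻¹ := by
  have hR0 : 0 < R := by linarith
  have hL0 : 0 ≤ L := by linarith
  have hp := le_cubicCoeff hR
  have hq := quarticCoeff_nonneg hR0.le
  rw [← decay_abs, ← cos_phase_abs, ← saddleMajorant_abs, div_pow, ← sq_abs y, ← div_pow]
  rcases le_total |y| 1 with hy | hy
  · have hqw : 2 * quarticCoeff R ≤ (1 - 0.91) * curvature R := by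
      linarith [quarticCoeff_le hR, one_le_curvature hR0.le]
    rw [← Real.cos_neg]
    exact (exp_neg_mul_cos_le_saddleMajorant hL0 hp hq hqw (abs_nonneg y) hy
      (decay_le hL0 hR0 _) (le_decay hL0 hR0 _) (neg_phase_le hL0 hR0 (abs_nonneg y))
      (le_neg_phase hL0 hR0 (abs_nonneg y))).trans (le_add_of_nonneg_right (by positivity))
  · exact (exp_neg_decay_mul_cos_le_of_one_le (by linarith) hRL hy _).trans
      (le_add_of_nonneg_left
        (saddleMajorant_nonneg hL (by linarith) (cubicCoeff_le R) hq hy))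

/-! ### Integrating the bounds -/

theorem integrable_sum_even_pow_mul_exp_neg_mul_sq {m : ℕ} {c : ℝ} (hc : 0 < c) (a : Fin m → ℝ) :
    Integrable fun y : ℝ => ∑ k, a k * (y ^ (2 * k : ℕ) * Real.exp (-(c / 2) * y ^ 2)) :=
  integrable_finsetSum _ fun k _ => (integrable_pow_mul_exp_neg_mul_sq hc (2 * k)).const_mul (a k)

theorem integral_sum_even_pow_mul_exp_neg_mul_sq {m : ℕ} {c : ℝ} (hc : 0 < c) (a : Fin m → ℝ) :
    ∫ y : ℝ, ∑ k, a k * (y ^ (2 * k : ℕ) * Real.exp (-(c / 2) * y ^ 2)) =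
      √(2 * Real.pi / c) * ∑ k : Fin m, a k * ((2 * k - 1 : ℕ)‼ / c ^ (k : ℕ)) := by
  rw [integral_finsetSum _ fun (k : Fin m) _ =>
    (integrable_pow_mul_exp_neg_mul_sq hc (2 * k)).const_mul (a k), Finset.mul_sum]
  refine Finset.sum_congr rfl fun k _ => ?_
  rw [integral_const_mul, integral_even_pow_mul_exp_neg_mul_sq hc]
  ring

/-- `L * w ^ 2` times the relative deviation of `∫ saddleMajorant` from `√(2π / (L * w))`. -/
noncomputable def saddleCorrection (L w p q s : ℝ) : ℝ :=
  3 * q - 15 / 2 * p ^ 2 / w +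
    (7 / 8 * p / w ^ 2 + 385 / 1152 / w ^ 4 + 105 / 2 * q ^ 2 / (s ^ 4 * √s * w ^ 2)) / L

theorem saddleMajorant_eq_sum (L w p q s y : ℝ) : saddleMajorant L w p q s y =
    ∑ k, ![1, 0, L * q, -(L ^ 2 * p ^ 2 / 2), L ^ 2 * p / 120, 0, L ^ 4 / 31104] k *
      (y ^ (2 * k : ℕ) * Real.exp (-(L * w / 2) * y ^ 2)) +
    (L * q) ^ 2 / 2 * (y ^ (2 * 4) * Real.exp (-(s * (L * w) / 2) * y ^ 2)) := by
  simp only [saddleMajorant, Fin.sum_univ_seven, Matrix.cons_val, Fin.isValue,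
    Fin.coe_ofNat_eq_mod]
  ring

theorem integrable_saddleMajorant (hL : 0 < L) (hw : 0 < w) (hs : 0 < s) :
    Integrable (saddleMajorant L w p q s) := by
  rw [funext (saddleMajorant_eq_sum L w p q s)]
  exact (integrable_sum_even_pow_mul_exp_neg_mul_sq (by positivity) _).add
    ((integrable_pow_mul_exp_neg_mul_sq (by positivity) _).const_mul _)

theorem integral_saddleMajorant (hL : 0 < L) (hw : 0 < w) (hs : 0 < s) :
    ∫ y, saddleMajorant L w p q s y =
      √(2 * Real.pi / (L * w)) * (1 + saddleCorrection L w p q s / (L * w ^ 2)) := by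
  have hc : 0 < L * w := by positivity
  have hsc : 0 < s * (L * w) := by positivity
  have hsqrt : √(2 * Real.pi / (s * (L * w))) = √(2 * Real.pi / (L * w)) / √s := by
    rw [← Real.sqrt_div (by positivity), div_div, mul_comm (L * w)]
  simp only [saddleMajorant_eq_sum]
  rw [integral_add (integrable_sum_even_pow_mul_exp_neg_mul_sq hc _)
      ((integrable_pow_mul_exp_neg_mul_sq hsc _).const_mul _), integral_const_mul,
    integral_sum_even_pow_mul_exp_neg_mul_sq hc, integral_even_pow_mul_exp_neg_mul_sq hsc, hsqrt,
    saddleCorrection]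
  have : 0 < √s := by positivity
  simp only [Fin.sum_univ_seven, Matrix.cons_val, Fin.isValue, Fin.coe_ofNat_eq_mod,
    Nat.zero_mod, Nat.reduceMul, Nat.reduceSub, Nat.doubleFactorial]
  push_cast
  field_simp
  ring

theorem leading_saddleCorrection_le (hR : 4.6 ≤ R) :
    3 * quarticCoeff R - 15 / 2 * cubicCoeff R ^ 2 / curvature R ≤ -0.0073 := by
  have hw : 0 < curvature R := by linarith [one_le_curvature (by linarith : 0 ≤ R)]
  suffices (3 * quarticCoeff R + 0.0073) * curvature R ≤ 15 / 2 * cubicCoeff R ^ 2 by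
    rw [← le_div_iff₀ hw] at this
    linarith
  obtain ⟨r, hr⟩ : ∃ r, r = 1 / R := ⟨_, rfl⟩
  have hr0 : 0 ≤ r := by rw [hr]; positivity
  have hr1 : r ≤ 1 / 4.6 := by rw [hr]; gcongr
  have hq : quarticCoeff R = 1 / 24 + r ^ 3 / 4 := by rw [quarticCoeff, hr]; field_simp
  have hp : cubicCoeff R = 1 / 6 - r ^ 2 / 3 := by rw [cubicCoeff, hr]; field_simp
  have hr2 : r ^ 2 ≤ 1 / 4.6 * r := by nlinarith
  have hr3 : r ^ 3 ≤ (1 / 4.6) ^ 2 * r := by nlinarith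
  rw [hq, hp, curvature, ← hr]
  norm_num at hr1 hr2 hr3 ⊢
  nlinarith [pow_nonneg hr0 4]

theorem secondary_saddleCorrection_le (hw : 1 ≤ w) (hp : p ≤ 1 / 6) (hq0 : 0 ≤ q)
    (hq : q ≤ 0.04424) :
    7 / 8 * p / w ^ 2 + 385 / 1152 / w ^ 4 + 105 / 2 * q ^ 2 / (0.91 ^ 4 * √0.91 * w ^ 2) ≤
      0.6383 := by
  have hsqrt : 0.95 ≤ √0.91 := Real.le_sqrt_of_sq_le (by norm_num)
  calc 7 / 8 * p / w ^ 2 + 385 / 1152 / w ^ 4 + 105 / 2 * q ^ 2 / (0.91 ^ 4 * √0.91 * w ^ 2)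
      ≤ 7 / 8 * (1 / 6) / 1 ^ 2 + 385 / 1152 / 1 ^ 4 +
          105 / 2 * 0.04424 ^ 2 / (0.91 ^ 4 * 0.95 * 1 ^ 2) := by
        gcongr
    _ ≤ 0.6383 := by norm_num

theorem saddleCorrection_le (hR : 4.6 ≤ R) (hL : 99 ≤ L) :
    saddleCorrection L (curvature R) (cubicCoeff R) (quarticCoeff R) 0.91 ≤ -0.0005 := by
  have hR0 : 0 ≤ R := by linarith
  have hsecondary : (7 / 8 * cubicCoeff R / curvature R ^ 2 + 385 / 1152 / curvature R ^ 4 +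
      105 / 2 * quarticCoeff R ^ 2 / (0.91 ^ 4 * √0.91 * curvature R ^ 2)) / L ≤ 0.0068 := by
    rw [div_le_iff₀ (by linarith)]
    linarith [secondary_saddleCorrection_le (one_le_curvature hR0) (cubicCoeff_le R)
      (quarticCoeff_nonneg hR0) (quarticCoeff_le hR)]
  rw [saddleCorrection]
  linarith [leading_saddleCorrection_le hR]

theorem exp_neg_two_mul_div_mul_le (hR : 0 < R) (hR2 : R ^ 2 ≤ L) (hR20 : 20 * R ≤ L) :
    Real.exp (-(2 * L / R)) * (R * L ^ 2) ≤ 0.0001 := by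
  obtain ⟨X, rfl⟩ : ∃ X, L = R * X := ⟨L / R, by field_simp⟩
  have hX20 : 20 ≤ X := by nlinarith
  have hRX : R ≤ X := by nlinarith
  have : 0 < X := by linarith
  have hexp : X ^ 5 ≤ 0.0001 * Real.exp (2 * X) := by
    calc X ^ 5 ≤ 0.0001 * (2 ^ 12 * 20 ^ 7 / 12 !) * X ^ 5 := by
          refine le_mul_of_one_le_left (by positivity) ?_
          norm_num [Nat.factorial]
      _ ≤ 0.0001 * (2 ^ 12 * X ^ 7 / 12 !) * X ^ 5 := by gcongr
      _ = 0.0001 * ((2 * X) ^ 12 / 12 !) := by ring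
      _ ≤ 0.0001 * Real.exp (2 * X) := by
          gcongr; exact Real.pow_div_factorial_le_exp _ (by positivity) 12
  calc Real.exp (-(2 * (R * X) / R)) * (R * (R * X) ^ 2)
      = R ^ 3 * X ^ 2 / Real.exp (2 * X) := by
        rw [show 2 * (R * X) / R = 2 * X by field_simp, Real.exp_neg]; field_simp
    _ ≤ X ^ 3 * X ^ 2 / Real.exp (2 * X) := by gcongr
    _ = X ^ 5 / Real.exp (2 * X) := by ring
    _ ≤ 0.0001 := by rwa [div_le_iff₀ (Real.exp_pos _)]

theorem exp_neg_two_mul_div_mul_pi_le (hR : 4.6 ≤ R) (hR2 : R ^ 2 ≤ L) (hR20 : 20 * R ≤ L) :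
    Real.exp (-(2 * L / R)) * (R * Real.pi) ≤
      √(2 * Real.pi / (L * curvature R)) * (0.0005 / (L * curvature R ^ 2)) := by
  have hR0 : 0 < R := by linarith
  have hL0 : 0 < L := by linarith
  have hw := curvature_le hR
  have hw0 : 0 < curvature R := by linarith [one_le_curvature hR0.le]
  have hgauss : 1 / L ≤ √(2 * Real.pi / (L * curvature R)) := by
    refine Real.le_sqrt_of_sq_le ?_
    rw [div_pow, one_pow, div_le_div_iff₀ (by positivity) (by positivity)]
    nlinarith [Real.pi_gt_three]
  have hpi : Real.pi * curvature R ^ 2 ≤ 3.15 * 1.22 ^ 2 := by gcongr; exact Real.pi_lt_d2.le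
  calc Real.exp (-(2 * L / R)) * (R * Real.pi)
      = Real.exp (-(2 * L / R)) * (R * L ^ 2) * (Real.pi * curvature R ^ 2) *
          (1 / L * (1 / (L * curvature R ^ 2))) := by field_simp
    _ ≤ 0.0001 * (3.15 * 1.22 ^ 2) *
          (√(2 * Real.pi / (L * curvature R)) * (1 / (L * curvature R ^ 2))) := by
        gcongr
        exact exp_neg_two_mul_div_mul_le hR0 hR2 hR20
    _ ≤ 0.0005 * (√(2 * Real.pi / (L * curvature R)) * (1 / (L * curvature R ^ 2))) := by
        gcongr
        norm_num
    _ = _ := by ring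

theorem integral_exp_neg_decay_mul_cos_phase_le (hR : 4.6 ≤ R) (hL : 99 ≤ L) (hR2 : R ^ 2 ≤ L)
    (hR20 : 20 * R ≤ L)
    (hint : Integrable fun y => Real.exp (-decay L (R * L) R y) * Real.cos (phase L (R * L) R y)) :
    ∫ y, Real.exp (-decay L (R * L) R y) * Real.cos (phase L (R * L) R y) ≤
      √(2 * Real.pi / (L * curvature R)) := by
  have hR0 : 0 < R := by linarith
  have hL0 : 0 < L := by linarith
  have hw0 : 0 < curvature R := by linarith [one_le_curvature hR0.le]
  have hmajorant : Integrable
      (saddleMajorant L (curvature R) (cubicCoeff R) (quarticCoeff R) 0.91) :=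
    integrable_saddleMajorant hL0 hw0 (by norm_num)
  have htail : Integrable fun y : ℝ => Real.exp (-(2 * L / R)) * (1 + (y / R) ^ 2)⁻¹ :=
    (integrable_inv_one_add_sq.comp_div hR0.ne').const_mul _
  have htail_integral : ∫ y : ℝ, (1 + (y / R) ^ 2)⁻¹ = R * Real.pi := by
    rw [Measure.integral_comp_div (fun y : ℝ => (1 + y ^ 2)⁻¹) R, integral_univ_inv_one_add_sq,
      abs_of_pos hR0, smul_eq_mul]
  have hcorrection := saddleCorrection_le hR hL
  calc _ ≤ ∫ y, (saddleMajorant L (curvature R) (cubicCoeff R) (quarticCoeff R) 0.91 y +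
          Real.exp (-(2 * L / R)) * (1 + (y / R) ^ 2)⁻¹) :=
        integral_mono hint (hmajorant.add htail)
          (exp_neg_decay_mul_cos_phase_le hR (by linarith) (by linarith))
    _ = √(2 * Real.pi / (L * curvature R)) * (1 + saddleCorrection L (curvature R) (cubicCoeff R)
            (quarticCoeff R) 0.91 / (L * curvature R ^ 2)) +
          Real.exp (-(2 * L / R)) * (R * Real.pi) := by
        rw [integral_add hmajorant htail, integral_saddleMajorant hL0 hw0 (by norm_num),
          integral_const_mul, htail_integral]
    _ ≤ √(2 * Real.pi / (L * curvature R)) * (1 + -0.0005 / (L * curvature R ^ 2)) +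
          √(2 * Real.pi / (L * curvature R)) * (0.0005 / (L * curvature R ^ 2)) := by
        refine add_le_add ?_ (exp_neg_two_mul_div_mul_pi_le hR hR2 hR20)
        gcongr
    _ = √(2 * Real.pi / (L * curvature R)) := by ring

end SaddlePoint

/-! ### The range `457 ≤ n` -/

theorem four_point_six_le_lambertW {x : ℝ} (hx : 458 ≤ x) : 4.6 ≤ lambertW x := by
  have hexp : Real.exp (23 / 5) ≤ 99.5 := by
    calc Real.exp (23 / 5) = Real.exp ((23 / 5 : ℚ) : ℝ) := by norm_num
      _ ≤ expUpper (23 / 5) := exp_le_expUpper (by norm_num) (by norm_num)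
      _ ≤ ((99.5 : ℚ) : ℝ) := by exact_mod_cast (by decide +kernel : expUpper (23 / 5) ≤ 99.5)
      _ = 99.5 := by norm_num
  refine le_lambertW (by linarith) ?_
  norm_num at hexp ⊢
  linarith

theorem mul_quadratic_le_exp {R : ℝ} (hR : 4.6 ≤ R) :
    99 * (1 + (R - 4.6) + (R - 4.6) ^ 2 / 2) ≤ Real.exp R := by
  have hexp : 99 ≤ Real.exp 4.6 := by
    calc (99 : ℝ) = ((99 : ℚ) : ℝ) := by norm_num
      _ ≤ expLower (23 / 5) := by exact_mod_cast (by decide +kernel : 99 ≤ expLower (23 / 5))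
      _ ≤ Real.exp ((23 / 5 : ℚ) : ℝ) := expLower_le_exp (by norm_num)
      _ = Real.exp 4.6 := by norm_num
  have hR0 : 0 ≤ R - 4.6 := by linarith
  calc 99 * (1 + (R - 4.6) + (R - 4.6) ^ 2 / 2) ≤ Real.exp 4.6 * Real.exp (R - 4.6) := by
        gcongr; exact Real.quadratic_le_exp_of_nonneg hR0
    _ = Real.exp R := by rw [← Real.exp_add, add_sub_cancel]

theorem E_eq_sqrt_curvature (n : ℕ) :
    E n = n ! * Real.exp (Real.exp (lambertW (n + 1)) - 1) /
        (2 * Real.pi * lambertW (n + 1) ^ (n + 1)) *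
      √(2 * Real.pi / (Real.exp (lambertW (n + 1)) * curvature (lambertW (n + 1)))) := by
  have hN : (0 : ℝ) < n + 1 := by positivity
  have hW := lambertW_pos hN
  have hspec := lambertW_mul_exp hN.le
  rw [E]
  set W := lambertW (n + 1)
  have hw : 0 < curvature W := by linarith [one_le_curvature hW.le]
  have hsqrt : √(2 * Real.pi / (Real.exp W * curvature W)) =
      2 * Real.pi * W / √(2 * Real.pi * (n + 1) * (W + 1)) := by
    rw [eq_div_iff (by positivity), ← Real.sqrt_mul (by positivity), ← hspec,
      show 2 * Real.pi / (Real.exp W * curvature W) * (2 * Real.pi * (W * Real.exp W) * (W + 1)) =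
        (2 * Real.pi * W) ^ 2 by rw [curvature]; field_simp, Real.sqrt_sq (by positivity)]
  have : √(2 * Real.pi * (n + 1) * (W + 1)) ≠ 0 := by positivity
  rw [hsqrt, pow_succ]
  field_simp

theorem bell_le_E_of_457_le {n : ℕ} (hn : 457 ≤ n) : (Bell n : ℝ) ≤ E n := by
  have hN : (458 : ℝ) ≤ n + 1 := by exact_mod_cast Nat.succ_le_succ hn
  have hR := four_point_six_le_lambertW hN
  have hspec := lambertW_mul_exp (by linarith : (0 : ℝ) ≤ n + 1)
  rw [E_eq_sqrt_curvature]
  set R := lambertW (n + 1)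
  have hR0 : 0 < R := by linarith
  have hn0 : n ≠ 0 := by omega
  have hexp := mul_quadratic_le_exp hR
  have hint := integrable_exp_neg_decay_mul_cos_phase hR0 hn0
  rw [bell_eq_integral hR0 hn0]
  rw [← hspec] at hint ⊢
  gcongr
  exact integral_exp_neg_decay_mul_cos_phase_le hR (by nlinarith) (by nlinarith) (by nlinarith) hint

theorem stmt_2 (n : ℕ) (hn : 311 ≤ n) : (Bell n : ℝ) ≤ E n := by
  rcases lt_or_ge n 457 with hlt | hge
  · exact bell_le_E_of_mem_Ico (Finset.mem_Ico.mpr ⟨hn, hlt⟩)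
  · exact bell_le_E_of_457_le hge
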